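/- In the symmetric group S_n (for n ≥ 2), the number of (n−1)-tuples (t_1, …, t_{n−1}) of transpositions such that t_1 t_2 ⋯ t_{n−1} equals the long cycle (1 2 ⋯ n) is exactly n^{n−2}. -/

import Mathlib

open scoped Classical

namespace Equiv.Perm

open _root_.Finset

variable {α : Type*}

theorem SameCycle.rel_of_forall_rel_apply [Finite α] {f : Perm α} {r : α → α → Prop}
    (hr : Equivalence r) (h : ∀ x, r x (f x)) {x y : α} (hxy : f.SameCycle x y) : r x y := by
  obtain ⟨i, rfl⟩ := hxy.exists_nat_pow_eq
  induction i with
  | zero => exact hr.refl x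
  | succ i ih =>
    rw [pow_succ', mul_apply]
    exact hr.trans (ih ⟨i, by simp⟩) (h _)

variable [DecidableEq α]

theorem SameCycle.of_mul_swap [Finite α] {f : Perm α} {a b x y : α} (hab : f.SameCycle a b)
    (h : (f * swap a b).SameCycle x y) : f.SameCycle x y := by
  refine h.rel_of_forall_rel_apply (SameCycle.equivalence f) fun z => ?_
  rw [mul_apply, sameCycle_apply_right]
  rcases eq_or_ne z a with rfl | hza
  · simpa using hab
  rcases eq_or_ne z b with rfl | hzb
  · simpa using hab.symm
  · rw [swap_apply_of_ne_of_ne hza hzb]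

theorem sameCycle_mul_swap_self [Finite α] {f : Perm α} {a b : α} (hab : ¬ f.SameCycle a b) :
    (f * swap a b).SameCycle a b := by
  by_contra hcon
  have key : ∀ i : ℕ, (f * swap a b).SameCycle a ((f ^ i) (f b)) := by
    intro i
    induction i with
    | zero => exact ⟨1, by simp⟩
    | succ i ih =>
      have ha : (f ^ i) (f b) ≠ a := fun h =>
        hab (SameCycle.symm ⟨(i + 1 : ℕ), by rw [zpow_natCast, pow_succ, mul_apply, h]⟩)
      have hb : (f ^ i) (f b) ≠ b := fun h => hcon (by rwa [h] at ih)
      have := ih.apply_right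
      rwa [mul_apply, swap_apply_of_ne_of_ne ha hb, ← mul_apply, ← pow_succ'] at this
  obtain ⟨i, hi⟩ := (sameCycle_apply_left.2 (SameCycle.refl f b)).exists_nat_pow_eq
  have := key i
  rw [hi] at this
  exact hcon this

theorem SameCycle.mul_swap [Finite α] {f : Perm α} {a b x y : α} (hab : ¬ f.SameCycle a b)
    (h : f.SameCycle x y) : (f * swap a b).SameCycle x y := by
  have hs := sameCycle_mul_swap_self hab
  refine h.rel_of_forall_rel_apply (SameCycle.equivalence _) fun z => ?_
  have h1 : f z = (f * swap a b) (swap a b z) := by simp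
  rw [h1, sameCycle_apply_right]
  rcases eq_or_ne z a with rfl | hza
  · simpa using hs
  rcases eq_or_ne z b with rfl | hzb
  · simpa using hs.symm
  · rw [swap_apply_of_ne_of_ne hza hzb]

theorem sameCycle_mul_swap_iff [Finite α] {f : Perm α} {a b x y : α} (hab : ¬ f.SameCycle a b) :
    (f * swap a b).SameCycle x y ↔ f.SameCycle x y ∨
      (f.SameCycle a x ∨ f.SameCycle b x) ∧ (f.SameCycle a y ∨ f.SameCycle b y) := by
  constructor
  · intro h
    refine h.rel_of_forall_rel_apply (r := fun x y => f.SameCycle x y ∨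
      (f.SameCycle a x ∨ f.SameCycle b x) ∧ (f.SameCycle a y ∨ f.SameCycle b y))
      ⟨fun x => .inl (.refl f x), ?_, ?_⟩ fun z => ?_
    · rintro x y (h | h)
      · exact .inl h.symm
      · exact .inr h.symm
    · rintro x y z (h | h) (h' | h')
      · exact .inl (h.trans h')
      · exact .inr ⟨h'.1.imp (fun k => k.trans h.symm) (fun k => k.trans h.symm), h'.2⟩
      · exact .inr ⟨h.1, h.2.imp (fun k => k.trans h') (fun k => k.trans h')⟩
      · exact .inr ⟨h.1, h'.2⟩
    · simp only [mul_apply, sameCycle_apply_right]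
      rcases eq_or_ne z a with rfl | hza
      · simp [SameCycle.refl]
      rcases eq_or_ne z b with rfl | hzb
      · simp [SameCycle.refl]
      · simp [swap_apply_of_ne_of_ne hza hzb, SameCycle.refl]
  · have hs := sameCycle_mul_swap_self hab
    have hbase : ∀ z, f.SameCycle a z ∨ f.SameCycle b z → (f * swap a b).SameCycle a z := by
      rintro z (h | h)
      · exact h.mul_swap hab
      · exact hs.trans (h.mul_swap hab)
    rintro (h | ⟨hx, hy⟩)
    · exact h.mul_swap hab
    · exact (hbase x hx).symm.trans (hbase y hy)

variable [Fintype α]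

/-- The set of points lying in the same cycle of `f` as `x`, fixed points included. -/
noncomputable def cycleClass (f : Perm α) (x : α) : Finset α := {y | f.SameCycle x y}

/-- The set of cycles of `f`, fixed points included, each seen as a set of points. -/
noncomputable def cycleClasses (f : Perm α) : Finset (Finset α) := univ.image f.cycleClass

@[simp]
theorem mem_cycleClass {f : Perm α} {x y : α} : y ∈ f.cycleClass x ↔ f.SameCycle x y := by
  simp [cycleClass]

theorem cycleClass_eq_iff {f : Perm α} {x y : α} :
    f.cycleClass x = f.cycleClass y ↔ f.SameCycle x y := by
  constructor
  · intro h
    rw [← mem_cycleClass, h, mem_cycleClass]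
  · intro h
    ext z
    rw [mem_cycleClass, mem_cycleClass]
    exact ⟨h.symm.trans, h.trans⟩

theorem cycleClass_mem_cycleClasses (f : Perm α) (x : α) : f.cycleClass x ∈ f.cycleClasses :=
  mem_image_of_mem _ (mem_univ x)

theorem card_cycleClass_pos (f : Perm α) (x : α) : 0 < #(f.cycleClass x) :=
  card_pos.2 ⟨x, mem_cycleClass.2 (.refl f x)⟩

theorem cycleClasses_mul_swap {f : Perm α} {a b : α} (hab : ¬ f.SameCycle a b) :
    (f * swap a b).cycleClasses = insert (f.cycleClass a ∪ f.cycleClass b)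
      ((f.cycleClasses.erase (f.cycleClass a)).erase (f.cycleClass b)) := by
  have hmerged : ∀ x, f.SameCycle a x ∨ f.SameCycle b x →
      (f * swap a b).cycleClass x = f.cycleClass a ∪ f.cycleClass b := by
    intro x hx
    ext z
    simp only [mem_cycleClass, sameCycle_mul_swap_iff hab, mem_union, hx, true_and,
      or_iff_right_iff_imp]
    exact fun h => hx.imp (fun k => k.trans h) (fun k => k.trans h)
  have hother : ∀ x, ¬ (f.SameCycle a x ∨ f.SameCycle b x) →
      (f * swap a b).cycleClass x = f.cycleClass x := by
    intro x hx
    ext z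
    simp only [mem_cycleClass, sameCycle_mul_swap_iff hab, hx, false_and, or_false]
  ext c
  simp only [cycleClasses, mem_insert, mem_erase, mem_image, mem_univ, true_and]
  constructor
  · rintro ⟨x, rfl⟩
    by_cases hx : f.SameCycle a x ∨ f.SameCycle b x
    · exact .inl (hmerged x hx)
    · rw [hother x hx]
      push Not at hx
      refine .inr ⟨fun h => hx.2 (cycleClass_eq_iff.1 h.symm),
        fun h => hx.1 (cycleClass_eq_iff.1 h.symm), x, rfl⟩
  · rintro (rfl | ⟨hb, ha, x, rfl⟩)
    · exact ⟨a, hmerged a (.inl (.refl f a))⟩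
    · refine ⟨x, hother x ?_⟩
      rintro (h | h)
      · exact ha (cycleClass_eq_iff.2 h.symm)
      · exact hb (cycleClass_eq_iff.2 h.symm)

theorem cycleClass_union_notMem (f : Perm α) (a b : α) :
    f.cycleClass a ∪ f.cycleClass b ∉
      (f.cycleClasses.erase (f.cycleClass a)).erase (f.cycleClass b) := by
  simp only [cycleClasses, mem_erase, mem_image, mem_univ, true_and]
  rintro ⟨-, ha, x, hx⟩
  refine ha (hx.symm.trans (cycleClass_eq_iff.2 ?_))
  rw [← mem_cycleClass, hx]
  exact mem_union_left _ (mem_cycleClass.2 (.refl f a))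

theorem cycleClass_mem_erase {f : Perm α} {a b : α} (hab : ¬ f.SameCycle a b) :
    f.cycleClass b ∈ f.cycleClasses.erase (f.cycleClass a) :=
  mem_erase.2 ⟨fun h => hab (cycleClass_eq_iff.1 h.symm), f.cycleClass_mem_cycleClasses b⟩

theorem card_cycleClasses_mul_swap {f : Perm α} {a b : α} (hab : ¬ f.SameCycle a b) :
    #(f * swap a b).cycleClasses + 1 = #f.cycleClasses := by
  rw [cycleClasses_mul_swap hab, card_insert_of_notMem (cycleClass_union_notMem f a b),
    card_erase_add_one (cycleClass_mem_erase hab),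
    card_erase_add_one (f.cycleClass_mem_cycleClasses a)]

theorem card_cycleClasses_le_of_sameCycle {f : Perm α} {a b : α} (hab : f.SameCycle a b) :
    #f.cycleClasses ≤ #(f * swap a b).cycleClasses := by
  have h : f.cycleClasses = (f * swap a b).cycleClasses.image
      fun s => ({y | ∃ x ∈ s, f.SameCycle x y} : Finset α) := by
    rw [cycleClasses, cycleClasses, image_image]
    refine image_congr fun x _ => ?_
    ext y
    simp only [mem_cycleClass, Function.comp_apply, mem_filter, mem_univ, true_and]
    exact ⟨fun h => ⟨x, .refl _ x, h⟩, fun ⟨z, hz, h⟩ => (hab.of_mul_swap hz).trans h⟩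
  rw [h]
  exact card_image_le

theorem prod_card_cycleClasses_mul_swap {f : Perm α} {a b : α} (hab : ¬ f.SameCycle a b) :
    (∏ c ∈ (f * swap a b).cycleClasses, (#c : ℚ)) =
      (∏ c ∈ f.cycleClasses, (#c : ℚ)) *
        ((#(f.cycleClass a) : ℚ)⁻¹ + (#(f.cycleClass b) : ℚ)⁻¹) := by
  have hdisj : _root_.Disjoint (f.cycleClass a) (f.cycleClass b) := by
    rw [Finset.disjoint_left]
    intro x hx hx'
    rw [mem_cycleClass] at hx hx'
    exact hab (hx.trans hx'.symm)
  have ha : (#(f.cycleClass a) : ℚ) ≠ 0 := by exact_mod_cast (f.card_cycleClass_pos a).ne'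
  have hb : (#(f.cycleClass b) : ℚ) ≠ 0 := by exact_mod_cast (f.card_cycleClass_pos b).ne'
  rw [cycleClasses_mul_swap hab, prod_insert (cycleClass_union_notMem f a b),
    card_union_of_disjoint hdisj,
    ← mul_prod_erase _ _ (f.cycleClass_mem_cycleClasses a),
    ← mul_prod_erase _ _ (cycleClass_mem_erase hab)]
  push_cast
  field_simp
  ring

theorem sum_inv_card_cycleClass (f : Perm α) :
    ∑ x, (#(f.cycleClass x) : ℚ)⁻¹ = #f.cycleClasses := by
  rw [← sum_fiberwise_of_maps_to (g := f.cycleClass) (t := f.cycleClasses)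
    fun x _ => f.cycleClass_mem_cycleClasses x, card_eq_sum_ones, Nat.cast_sum]
  refine sum_congr rfl fun c hc => ?_
  obtain ⟨x, -, rfl⟩ := mem_image.1 hc
  have hfib : ({y | f.cycleClass y = f.cycleClass x} : Finset α) = f.cycleClass x := by
    ext y
    simp [cycleClass_eq_iff, sameCycle_comm]
  have hx : (#(f.cycleClass x) : ℚ) ≠ 0 := by exact_mod_cast (f.card_cycleClass_pos x).ne'
  rw [sum_congr rfl fun y hy => by rw [(mem_filter.1 hy).2], hfib, sum_const, nsmul_eq_mul,
    mul_inv_cancel₀ hx, Nat.cast_one]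

theorem sum_not_sameCycle_inv_add_inv (f : Perm α) :
    ∑ a, ∑ b, (if f.SameCycle a b then 0 else
      ((#(f.cycleClass a) : ℚ)⁻¹ + (#(f.cycleClass b) : ℚ)⁻¹)) =
      2 * Fintype.card α * (#f.cycleClasses - 1) := by
  have hone : ∀ a, ∑ b, (if f.SameCycle a b then 0 else (#(f.cycleClass a) : ℚ)⁻¹) =
      Fintype.card α * (#(f.cycleClass a) : ℚ)⁻¹ - 1 := by
    intro a
    have ha : (#(f.cycleClass a) : ℚ) ≠ 0 := by exact_mod_cast (f.card_cycleClass_pos a).ne'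
    have hsplit : ∀ b, (if f.SameCycle a b then 0 else (#(f.cycleClass a) : ℚ)⁻¹) =
        (#(f.cycleClass a) : ℚ)⁻¹ - if f.SameCycle a b then (#(f.cycleClass a) : ℚ)⁻¹ else 0 := by
      intro b
      split_ifs <;> simp
    have hcard : #({b | f.SameCycle a b} : Finset α) = #(f.cycleClass a) := rfl
    rw [sum_congr rfl fun b _ => hsplit b, sum_sub_distrib, ← sum_filter, sum_const, sum_const,
      hcard, nsmul_eq_mul, nsmul_eq_mul, mul_inv_cancel₀ ha, card_univ]
  have hhalf : ∑ a, ∑ b, (if f.SameCycle a b then 0 else (#(f.cycleClass a) : ℚ)⁻¹) =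
      Fintype.card α * (#f.cycleClasses - 1) := by
    rw [sum_congr rfl fun a _ => hone a, sum_sub_distrib, ← mul_sum, sum_inv_card_cycleClass,
      sum_const, card_univ, nsmul_eq_mul]
    ring
  have hhalf' : ∑ a, ∑ b, (if f.SameCycle a b then 0 else (#(f.cycleClass b) : ℚ)⁻¹) =
      Fintype.card α * (#f.cycleClasses - 1) := by
    rw [sum_comm, ← hhalf]
    simp only [sameCycle_comm]
  have hsplit : ∀ a b, (if f.SameCycle a b then 0 else
      ((#(f.cycleClass a) : ℚ)⁻¹ + (#(f.cycleClass b) : ℚ)⁻¹)) =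
      (if f.SameCycle a b then 0 else (#(f.cycleClass a) : ℚ)⁻¹) +
        if f.SameCycle a b then 0 else (#(f.cycleClass b) : ℚ)⁻¹ := by
    intro a b
    split_ifs <;> simp
  simp only [hsplit, sum_add_distrib, hhalf, hhalf']
  ring

theorem two_mul_sum_isSwap (F : Perm α → ℚ) :
    2 * ∑ s with s.IsSwap, F s = ∑ a, ∑ b, if a = b then 0 else F (swap a b) := by
  have h : ∑ a, ∑ b, (if a = b then 0 else F (swap a b)) =
      ∑ p : α × α with p.1 ≠ p.2, F (swap p.1 p.2) := by
    rw [sum_filter, Fintype.sum_prod_type]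
    simp only [ne_eq, ite_not]
  rw [h, ← sum_fiberwise_of_maps_to (g := fun p : α × α => swap p.1 p.2)
    (t := ({s | s.IsSwap} : Finset (Perm α)))
    fun p hp => mem_filter.2 ⟨mem_univ _, p.1, p.2, (mem_filter.1 hp).2, rfl⟩, mul_sum]
  refine sum_congr rfl fun s hs => ?_
  obtain ⟨a, b, hab, rfl⟩ := (mem_filter.1 hs).2
  have hfib : ({p ∈ ({p | p.1 ≠ p.2} : Finset (α × α)) | swap p.1 p.2 = swap a b}) =
      {(a, b), (b, a)} := by
    ext ⟨x, y⟩
    simp only [mem_filter, mem_univ, true_and, mem_insert, mem_singleton, Prod.mk.injEq]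
    constructor
    · rintro ⟨hxy, h⟩
      have hx : swap a b x = y := by rw [← h, swap_apply_left]
      rw [swap_apply_def] at hx
      split_ifs at hx with h1 h2
      · exact .inl ⟨h1, hx.symm⟩
      · exact .inr ⟨h2, hx.symm⟩
      · exact absurd hx hxy
    · rintro (⟨rfl, rfl⟩ | ⟨rfl, rfl⟩)
      · exact ⟨hab, rfl⟩
      · exact ⟨hab.symm, swap_comm _ _⟩
  rw [sum_congr rfl fun p hp => by rw [(mem_filter.1 hp).2], hfib, sum_const,
    card_pair (by simp [hab]), nsmul_eq_mul, Nat.cast_ofNat]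

/-- The number of `m`-tuples of transpositions whose product, multiplied by `f` on the left, has
a single cycle. -/
noncomputable def numSwapCompletions (m : ℕ) (f : Perm α) : ℕ :=
  #{t : Fin m → Perm α | (∀ i, (t i).IsSwap) ∧ ∀ x y, (f * (List.ofFn t).prod).SameCycle x y}

theorem numSwapCompletions_zero (f : Perm α) :
    numSwapCompletions 0 f = if ∀ x y, f.SameCycle x y then 1 else 0 := by
  simp [numSwapCompletions, Finset.filter_const, apply_ite Finset.card]

theorem numSwapCompletions_succ (m : ℕ) (f : Perm α) :
    numSwapCompletions (m + 1) f = ∑ s with s.IsSwap, numSwapCompletions m (f * s) := by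
  have h : numSwapCompletions (m + 1) f = #(({s | s.IsSwap} : Finset (Perm α)).sigma fun s =>
      ({t : Fin m → Perm α | (∀ i, (t i).IsSwap) ∧
        ∀ x y, (f * s * (List.ofFn t).prod).SameCycle x y} : Finset (Fin m → Perm α))) := by
    refine card_bij' (fun t _ => ⟨t 0, Fin.tail t⟩) (fun p _ => Fin.cons p.1 p.2) ?_ ?_ ?_ ?_
    · intro t ht
      simp only [mem_filter, mem_univ, true_and, List.ofFn_succ, List.prod_cons] at ht
      simp only [mem_sigma, mem_filter, mem_univ, true_and]
      exact ⟨ht.1 0, fun i => ht.1 i.succ, by simpa [mul_assoc] using! ht.2⟩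
    · rintro ⟨s, t⟩ h
      simp only [mem_sigma, mem_filter, mem_univ, true_and] at h
      simp only [mem_filter, mem_univ, true_and, List.ofFn_succ, List.prod_cons, Fin.cons_zero,
        Fin.cons_succ, Fin.forall_fin_succ, ← mul_assoc]
      exact ⟨⟨h.1, h.2.1⟩, h.2.2⟩
    · intro t _
      exact Fin.cons_self_tail t
    · rintro ⟨s, t⟩ _
      simp
  rw [h, card_sigma]
  rfl

theorem numSwapCompletions_eq_zero {m : ℕ} {f : Perm α} (h : m + 1 < #f.cycleClasses) :
    numSwapCompletions m f = 0 := by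
  induction m generalizing f with
  | zero =>
    rw [numSwapCompletions_zero, if_neg]
    intro hf
    refine h.not_ge (card_le_one.2 ?_)
    intro c hc d hd
    obtain ⟨x, -, rfl⟩ := mem_image.1 hc
    obtain ⟨y, -, rfl⟩ := mem_image.1 hd
    exact cycleClass_eq_iff.2 (hf x y)
  | succ m ih =>
    rw [numSwapCompletions_succ]
    refine sum_eq_zero fun s hs => ih ?_
    obtain ⟨a, b, -, rfl⟩ := (mem_filter.1 hs).2
    by_cases hab : f.SameCycle a b
    · have := card_cycleClasses_le_of_sameCycle hab
      lia
    · have := card_cycleClasses_mul_swap hab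
      lia

theorem card_mul_numSwapCompletions {m : ℕ} {f : Perm α} (h : #f.cycleClasses = m + 1) :
    (Fintype.card α * numSwapCompletions m f : ℚ) =
      m.factorial * (Fintype.card α : ℚ) ^ m * ∏ c ∈ f.cycleClasses, (#c : ℚ) := by
  induction m generalizing f with
  | zero =>
    obtain ⟨c, hc⟩ := card_eq_one.1 h
    have hx : ∀ x, f.cycleClass x = c := fun x => by
      simpa [hc] using f.cycleClass_mem_cycleClasses x
    have hf : ∀ x y, f.SameCycle x y := fun x y => cycleClass_eq_iff.1 ((hx x).trans (hx y).symm)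
    have hcu : c = univ := by
      ext x
      rw [← hx x]
      simp [SameCycle.refl]
    rw [numSwapCompletions_zero, if_pos hf, hc, prod_singleton, hcu, card_univ]
    simp
  | succ m ih =>
    have hterm : ∀ a b, (if a = b then (0 : ℚ) else
        Fintype.card α * numSwapCompletions m (f * swap a b)) =
        m.factorial * (Fintype.card α : ℚ) ^ m * (∏ c ∈ f.cycleClasses, (#c : ℚ)) *
          if f.SameCycle a b then 0 else
            ((#(f.cycleClass a) : ℚ)⁻¹ + (#(f.cycleClass b) : ℚ)⁻¹) := by
      intro a b
      by_cases hab : f.SameCycle a b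
      · rw [if_pos hab, numSwapCompletions_eq_zero]
        · simp
        · have := card_cycleClasses_le_of_sameCycle hab
          lia
      · have hne : a ≠ b := fun h => hab (h ▸ .refl f a)
        have := card_cycleClasses_mul_swap hab
        rw [if_neg hab, if_neg hne, ih (by lia), prod_card_cycleClasses_mul_swap hab, mul_assoc,
          mul_assoc, mul_assoc]
    have hsum := two_mul_sum_isSwap
      fun s => (Fintype.card α * numSwapCompletions m (f * s) : ℚ)
    simp only [hterm, ← mul_sum, sum_not_sameCycle_inv_add_inv, h] at hsum
    rw [numSwapCompletions_succ]
    push_cast [Nat.factorial_succ] at hsum ⊢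
    linear_combination hsum / 2

theorem cycleClass_one (x : α) : (1 : Perm α).cycleClass x = {x} := by
  ext y
  simp [eq_comm]

theorem cycleClasses_one : (1 : Perm α).cycleClasses = univ.image fun x : α => {x} :=
  image_congr fun x _ => cycleClass_one x

theorem card_cycleClasses_one : #(1 : Perm α).cycleClasses = Fintype.card α := by
  rw [cycleClasses_one, card_image_of_injective _ singleton_injective, card_univ]

theorem numSwapCompletions_one {m : ℕ} (h : Fintype.card α = m + 1) :
    numSwapCompletions m (1 : Perm α) * (m + 1) = m.factorial * (m + 1) ^ m := by
  have hprod : ∏ c ∈ (1 : Perm α).cycleClasses, (#c : ℚ) = 1 := by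
    refine prod_eq_one fun c hc => ?_
    obtain ⟨x, -, rfl⟩ := mem_image.1 hc
    simp [cycleClass_one]
  have := card_mul_numSwapCompletions (card_cycleClasses_one.trans h)
  rw [hprod, h, mul_one, mul_comm] at this
  exact_mod_cast this

theorem forall_sameCycle_iff_cycleType_eq (h : 2 ≤ Fintype.card α) {f : Perm α} :
    (∀ x y, f.SameCycle x y) ↔ f.cycleType = {Fintype.card α} := by
  constructor
  · intro hf
    have hmove : ∀ x, f x ≠ x := by
      intro x hx
      obtain ⟨y, hy⟩ := Fintype.exists_ne_of_one_lt_card h x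
      exact hy ((hf x y).eq_of_left hx).symm
    have hcyc : f.IsCycle := by
      obtain ⟨x⟩ : Nonempty α := Fintype.card_pos_iff.1 (by lia)
      exact ⟨x, hmove x, fun y _ => hf x y⟩
    have hsupp : f.support = univ := by
      ext x
      simp [hmove]
    rw [hcyc.cycleType, hsupp, card_univ]
  · intro hf x y
    have hcyc : f.IsCycle := card_cycleType_eq_one.1 (by simp [hf])
    have hsupp : f.support = univ := by
      rw [hcyc.cycleType, Multiset.singleton_inj] at hf
      exact card_eq_iff_eq_univ _ |>.1 hf
    exact hcyc.sameCycle (mem_support.1 (hsupp ▸ mem_univ x)) (mem_support.1 (hsupp ▸ mem_univ y))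

theorem card_swap_factorizations_conj (m : ℕ) (f g : Perm α) :
    #{t : Fin m → Perm α | (∀ i, (t i).IsSwap) ∧ (List.ofFn t).prod = g * f * g⁻¹} =
      #{t : Fin m → Perm α | (∀ i, (t i).IsSwap) ∧ (List.ofFn t).prod = f} := by
  symm
  have hprod : ∀ t : Fin m → Perm α, (List.ofFn fun i => g * t i * g⁻¹).prod =
      g * (List.ofFn t).prod * g⁻¹ := by
    intro t
    have := (map_list_prod (MulAut.conj g) (List.ofFn t)).symm
    rwa [List.map_ofFn] at this
  have hswap : ∀ s : Perm α, (g * s * g⁻¹).IsSwap ↔ s.IsSwap := by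
    intro s
    rw [isSwap_iff_cycleType, isSwap_iff_cycleType, cycleType_conj]
  refine card_bijective _ (Equiv.piCongrRight fun _ : Fin m => (MulAut.conj g).toEquiv).bijective
    fun t => ?_
  have happly : (Equiv.piCongrRight fun _ : Fin m => (MulAut.conj g).toEquiv) t =
      fun i => g * t i * g⁻¹ := rfl
  rw [happly]
  simp only [mem_filter, mem_univ, true_and, hprod, hswap, mul_left_inj, mul_right_inj]

theorem numSwapCompletions_one_eq_mul (m : ℕ) (h : 2 ≤ Fintype.card α) {f : Perm α}
    (hf : f.cycleType = {Fintype.card α}) :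
    numSwapCompletions m (1 : Perm α) = (Fintype.card α - 1).factorial *
      #{t : Fin m → Perm α | (∀ i, (t i).IsSwap) ∧ (List.ofFn t).prod = f} := by
  have hcard := card_of_cycleType_singleton (α := α) h le_rfl
  rw [Nat.choose_self, mul_one] at hcard
  rw [numSwapCompletions, ← hcard, ← smul_eq_mul, ← sum_const,
    card_eq_sum_card_fiberwise (f := fun t : Fin m → Perm α => (List.ofFn t).prod)
      (t := ({g | g.cycleType = {Fintype.card α}} : Finset (Perm α)))]
  · refine sum_congr rfl fun g hg => ?_
    have hgt := (mem_filter.1 hg).2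
    obtain ⟨c, rfl⟩ := isConj_iff.1 (isConj_iff_cycleType_eq.2 (hf.trans hgt.symm))
    rw [← card_swap_factorizations_conj m f c, filter_filter]
    congr 1
    refine filter_congr fun t _ => ?_
    rw [one_mul, forall_sameCycle_iff_cycleType_eq h]
    exact ⟨fun H => ⟨H.1.1, H.2⟩, fun H => ⟨⟨H.1, H.2 ▸ hgt⟩, H.2⟩⟩
  · intro t ht
    have ht := (mem_filter.1 (mem_coe.1 ht)).2.2
    rw [one_mul, forall_sameCycle_iff_cycleType_eq h] at ht
    simpa using ht

end Equiv.Perm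

/-- **Hurwitz's theorem.** In the symmetric group `S_n` (for `n ≥ 2`), the number of
`(n-1)`-tuples of transpositions whose product is the long cycle `(1 2 ⋯ n)` is `n^(n-2)`. -/
theorem hurwitz_count_transposition_factorizations (n : ℕ) (hn : 2 ≤ n) :
    Nat.card {t : Fin (n - 1) → Equiv.Perm (Fin n) //
        (∀ i, (t i).IsSwap) ∧ (List.ofFn t).prod = finRotate n}
      = n ^ (n - 2) := by
  obtain ⟨k, rfl⟩ := Nat.exists_eq_add_of_le' hn
  have h1 := Equiv.Perm.numSwapCompletions_one (α := Fin (k + 2)) (m := k + 1) (by simp)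
  rw [Equiv.Perm.numSwapCompletions_one_eq_mul (f := finRotate (k + 2)) _ (by simp)
    (by rw [cycleType_finRotate, Fintype.card_fin]), Fintype.card_fin, mul_assoc] at h1
  have h2 := Nat.eq_of_mul_eq_mul_left (Nat.factorial_pos (k + 1)) h1
  rw [pow_succ] at h2
  rw [Nat.card_eq_fintype_card, Fintype.card_subtype]
  exact Nat.eq_of_mul_eq_mul_right (Nat.succ_pos (k + 1)) h2
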